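/- For every integer k ≥ 1 there exist constants c > 0 and C > 0 (depending only on k) such that the following holds for all sufficiently large N. Set Q := exp((log N)^{1/10}). Let 2 ≤ w ≤ z ≤ Q be reals with w ≤ (log N)^{1/100}, and set W := ∏_{p < w, p prime} p. Then for every integer 1 ≤ b ≤ W with gcd(b, W) = 1 one has ‖(φ(W)/W)·Λ_{Cramér,z}(W·+ b) − 1‖_{U^k([(N−b)/W])} ≤ C·w^{−c}, where Λ_{Cramér,z}(W·+b) denotes the function n ↦ Λ_{Cramér,z}(Wn + b) and φ is Euler's totient function. -/

import Mathlib

open scoped Classical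

noncomputable section

/-- The product of conjugated shifts appearing in the Gowers norm over an additive group. -/
def gowersProd {G : Type*} [AddCommGroup G] (k : ℕ) (f : G → ℂ) (n : G) (h : Fin k → G) : ℂ :=
  ∏ ω : Fin k → Bool,
    (⇑(starRingEnd ℂ))^[(Finset.univ.filter fun i => ω i = true).card]
      (f (n + ∑ i, if ω i then h i else 0))

/-- The unnormalized Gowers norm `‖f‖_{Ũ^k(G)}`. -/
def gowersTildeU {G : Type*} [AddCommGroup G] (k : ℕ) (f : G → ℂ) : ℝ :=
  (∑' nh : G × (Fin k → G), gowersProd k f nh.1 nh.2).re ^ ((1 : ℝ) / 2 ^ k)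

/-- The restriction `f·1_{[N]}` of `f : ℤ → ℂ` to `[N] = {n ∈ ℕ : 1 ≤ n ≤ N}`. -/
def truncN (N : ℝ) (f : ℤ → ℂ) : ℤ → ℂ := fun n => if 1 ≤ n ∧ (n : ℝ) ≤ N then f n else 0

/-- The local (normalized) Gowers norm `‖f‖_{U^k([N])}`. -/
def gowersUN (k : ℕ) (N : ℝ) (f : ℤ → ℂ) : ℝ :=
  gowersTildeU k (truncN N f) / gowersTildeU k (truncN N fun _ => 1)

/-- The Cramér model `Λ_{Cramér,w}(n) = ∏_{p < w, p prime} (p/(p-1))·1_{p ∤ n}`. -/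
def cramer (w : ℝ) (n : ℤ) : ℝ :=
  ∏ p ∈ (Finset.range (⌈w⌉₊ + 1)).filter fun p => Nat.Prime p ∧ (p : ℝ) < w,
    if (p : ℤ) ∣ n then 0 else (p : ℝ) / ((p : ℝ) - 1)

/-- The quantity `Q = exp((log N)^{1/10})`. -/
def Qparam (N : ℝ) : ℝ := Real.exp (Real.log N ^ ((1 : ℝ) / 10))

/-- The primorial `P(w) = ∏_{p < w, p prime} p`. -/
def primorialLT (w : ℝ) : ℕ :=
  ∏ p ∈ (Finset.range (⌈w⌉₊ + 1)).filter fun p => Nat.Prime p ∧ (p : ℝ) < w, p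

end

/-!
Expanding `∏ ω, (ν (cubeForm ω x) - 1)` over sets of vertices, `ν - 1` has small `U^k` norm as soon
as every correlation `∏ ω ∈ S, ν (cubeForm ω x)` has average `1 + O(1/w)` over the cubes `x` in
`[1, m]`. For `ν = (φ(W)/W) Λ_{Cramér,z}(W · + b)` the factor `φ(W)/W` cancels the primes below `w`,
so only `w ≤ p < z` matter. With `u = (log N)^{1/5}`, so that `z ≤ exp u`, Brun's sieve truncated at
degree about `u²` involves moduli up to `exp (O(u³))`, far below `m ≥ exp (u⁴)`; since the cubes are
equidistributed modulo such moduli, the average is a product of local factors over these primes, up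
to an error `O(exp (-u))`. Distinct vertices of a cube modulo `p` are pairwise independent, whence
the local factor at `p` is `1 + O(p⁻²)` and the product is `1 + O(1/w)`.
-/

lemma esymm_zero {R : Type*} [CommSemiring R] (s : Multiset R) : s.esymm 0 = 1 := by
  simp [Multiset.esymm]

lemma esymm_cons_succ {R : Type*} [CommSemiring R] (a : R) (s : Multiset R) (n : ℕ) :
    (a ::ₘ s).esymm (n + 1) = s.esymm (n + 1) + a * s.esymm n := by
  simp [Multiset.esymm, Multiset.powersetCard_cons, Multiset.sum_map_mul_left]

/-- The sum of the terms of degree `< r` in the inclusion-exclusion expansion of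
`∏ a ∈ s, (1 - a)`. -/
def bonferroniSum {R : Type*} [CommRing R] (s : Multiset R) (r : ℕ) : R :=
  ∑ j ∈ Finset.range r, (-1) ^ j * s.esymm j

lemma bonferroniSum_cons_succ {R : Type*} [CommRing R] (a : R) (s : Multiset R) (r : ℕ) :
    bonferroniSum (a ::ₘ s) (r + 1) = bonferroniSum s (r + 1) - a * bonferroniSum s r := by
  simp only [bonferroniSum]
  rw [Finset.sum_range_succ', Finset.sum_range_succ' _ r, esymm_zero, esymm_zero, Finset.mul_sum,
    add_sub_right_comm, ← Finset.sum_sub_distrib]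
  congr 1
  refine Finset.sum_congr rfl fun j _ => ?_
  rw [esymm_cons_succ]
  ring

lemma abs_prod_one_sub_sub_bonferroniSum_le {R : Type*} [CommRing R] [LinearOrder R]
    [IsStrictOrderedRing R] {s : Multiset R} (hs : ∀ a ∈ s, a ∈ Set.Icc 0 1) (r : ℕ) :
    |(s.map (1 - ·)).prod - bonferroniSum s r| ≤ s.esymm r := by
  induction s using Multiset.induction_on generalizing r with
  | empty => cases r <;> simp [bonferroniSum, Multiset.esymm, Finset.sum_range_succ',
      Multiset.powersetCard_zero_right]
  | cons a s ih =>
    have ha : a ∈ Set.Icc 0 1 := hs a (Multiset.mem_cons_self a s)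
    have ih := ih fun b hb => hs b (Multiset.mem_cons_of_mem hb)
    rw [Multiset.map_cons, Multiset.prod_cons]
    cases r with
    | zero =>
      have hprod : |(s.map (1 - ·)).prod| ≤ 1 := by
        simpa [bonferroniSum, esymm_zero] using ih 0
      simpa [bonferroniSum, esymm_zero, abs_mul] using
        mul_le_one₀ (abs_le.2 ⟨by linarith [ha.2], by linarith [ha.1]⟩) (abs_nonneg _) hprod
    | succ r =>
      rw [bonferroniSum_cons_succ, esymm_cons_succ]
      calc |(1 - a) * (s.map (1 - ·)).prod - (bonferroniSum s (r + 1) - a * bonferroniSum s r)|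
          = |((s.map (1 - ·)).prod - bonferroniSum s (r + 1))
              - a * ((s.map (1 - ·)).prod - bonferroniSum s r)| := by congr 1; ring
        _ ≤ |(s.map (1 - ·)).prod - bonferroniSum s (r + 1)|
              + |a * ((s.map (1 - ·)).prod - bonferroniSum s r)| := abs_sub _ _
        _ ≤ s.esymm (r + 1) + a * s.esymm r := by
            rw [abs_mul, abs_of_nonneg ha.1]
            exact add_le_add (ih _) (mul_le_mul_of_nonneg_left (ih _) ha.1)

lemma esymm_le_exp {s : Multiset ℝ} (hs : ∀ a ∈ s, 0 ≤ a) (r : ℕ) :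
    s.esymm r ≤ (1 / 2) ^ r * Real.exp (2 * s.sum) := by
  induction s using Multiset.induction_on generalizing r with
  | empty => cases r <;> simp [Multiset.esymm, Multiset.powersetCard_zero_right]
  | cons a s ih =>
    have ha : 0 ≤ a := hs a (Multiset.mem_cons_self a s)
    have ih := ih fun b hb => hs b (Multiset.mem_cons_of_mem hb)
    have hsum : 0 ≤ s.sum := Multiset.sum_nonneg fun b hb => hs b (Multiset.mem_cons_of_mem hb)
    rw [Multiset.sum_cons]
    cases r with
    | zero =>
      rw [esymm_zero, pow_zero, one_mul]
      exact Real.one_le_exp (by positivity)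
    | succ r =>
      calc (a ::ₘ s).esymm (r + 1) = s.esymm (r + 1) + a * s.esymm r := esymm_cons_succ a s r
        _ ≤ (1 / 2) ^ (r + 1) * Real.exp (2 * s.sum) + a * ((1 / 2) ^ r * Real.exp (2 * s.sum)) :=
            add_le_add (ih _) (mul_le_mul_of_nonneg_left (ih _) ha)
        _ = (1 / 2) ^ (r + 1) * (Real.exp (2 * s.sum) * (2 * a + 1)) := by ring
        _ ≤ (1 / 2) ^ (r + 1) * (Real.exp (2 * s.sum) * Real.exp (2 * a)) := by
            gcongr
            exact Real.add_one_le_exp _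
        _ = (1 / 2) ^ (r + 1) * Real.exp (2 * (a + s.sum)) := by
            rw [← Real.exp_add]
            ring_nf

section Sieve

variable {ι X : Type*} {P : Finset ι} {r : ℕ} {B : ℝ} {Ω : Finset X} {g : ι → X → ℝ} {ρ : ι → ℝ}

lemma abs_sum_esymm_sub_le {j : ℕ} (hj : j ≤ r)
    (hB : ∀ D ⊆ P, D.card ≤ r → |∑ x ∈ Ω, ∏ p ∈ D, g p x - Ω.card * ∏ p ∈ D, ρ p| ≤ B) :
    |∑ x ∈ Ω, (P.val.map (g · x)).esymm j - Ω.card * (P.val.map ρ).esymm j|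
      ≤ (P.card.choose j : ℝ) * B := by
  simp only [Finset.esymm_map_val]
  rw [Finset.sum_comm, Finset.mul_sum, ← Finset.sum_sub_distrib, ← Finset.card_powersetCard,
    ← nsmul_eq_mul]
  refine (Finset.abs_sum_le_sum_abs _ _).trans (Finset.sum_le_card_nsmul _ _ _ fun D hD => ?_)
  obtain ⟨hDP, hDj⟩ := Finset.mem_powersetCard.1 hD
  exact hB D hDP (hDj.trans_le hj)

lemma abs_sum_bonferroniSum_sub_le
    (hB : ∀ D ⊆ P, D.card ≤ r → |∑ x ∈ Ω, ∏ p ∈ D, g p x - Ω.card * ∏ p ∈ D, ρ p| ≤ B) :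
    |∑ x ∈ Ω, bonferroniSum (P.val.map (g · x)) r - Ω.card * bonferroniSum (P.val.map ρ) r|
      ≤ (∑ j ∈ Finset.range r, (P.card.choose j : ℝ)) * B := by
  simp only [bonferroniSum]
  rw [Finset.sum_comm, Finset.mul_sum, ← Finset.sum_sub_distrib, Finset.sum_mul]
  refine (Finset.abs_sum_le_sum_abs _ _).trans (Finset.sum_le_sum fun j hj => ?_)
  rw [← Finset.mul_sum, mul_left_comm, ← mul_sub, abs_mul, abs_pow, abs_neg, abs_one, one_pow,
    one_mul]
  exact abs_sum_esymm_sub_le (Finset.mem_range.1 hj).le hB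

/-- Brun's sieve, truncating both inclusion-exclusion expansions at degree `r`. -/
lemma abs_sum_prod_one_sub_sub_le (hg : ∀ p ∈ P, ∀ x ∈ Ω, g p x ∈ Set.Icc 0 1)
    (hρ : ∀ p ∈ P, ρ p ∈ Set.Icc 0 1)
    (hB : ∀ D ⊆ P, D.card ≤ r → |∑ x ∈ Ω, ∏ p ∈ D, g p x - Ω.card * ∏ p ∈ D, ρ p| ≤ B) :
    |∑ x ∈ Ω, ∏ p ∈ P, (1 - g p x) - Ω.card * ∏ p ∈ P, (1 - ρ p)|
      ≤ (∑ j ∈ Finset.range (r + 1), (P.card.choose j : ℝ)) * B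
        + 2 * Ω.card * (P.val.map ρ).esymm r := by
  have hbonf : ∀ {f : ι → ℝ}, (∀ p ∈ P, f p ∈ Set.Icc 0 1) →
      |∏ p ∈ P, (1 - f p) - bonferroniSum (P.val.map f) r| ≤ (P.val.map f).esymm r := by
    intro f hf
    have := abs_prod_one_sub_sub_bonferroniSum_le (s := P.val.map f) (by simpa using hf) r
    rwa [Multiset.map_map] at this
  have hsum : |∑ x ∈ Ω, ∏ p ∈ P, (1 - g p x) - ∑ x ∈ Ω, bonferroniSum (P.val.map (g · x)) r|
      ≤ ∑ x ∈ Ω, (P.val.map (g · x)).esymm r := by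
    rw [← Finset.sum_sub_distrib]
    exact (Finset.abs_sum_le_sum_abs _ _).trans
      (Finset.sum_le_sum fun x hx => hbonf fun p hp => hg p hp x hx)
  have hmain : |Ω.card * ∏ p ∈ P, (1 - ρ p) - Ω.card * bonferroniSum (P.val.map ρ) r|
      ≤ Ω.card * (P.val.map ρ).esymm r := by
    rw [← mul_sub, abs_mul, Nat.abs_cast]
    exact mul_le_mul_of_nonneg_left (hbonf hρ) (Nat.cast_nonneg _)
  have hlow := abs_sum_bonferroniSum_sub_le hB
  have htop := abs_sum_esymm_sub_le le_rfl hB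
  rw [Finset.sum_range_succ, add_mul]
  rw [abs_le] at *
  constructor <;> linarith [hsum.1, hsum.2, hmain.1, hmain.2, hlow.1, hlow.2, htop.1, htop.2]

end Sieve

/-- The proportion of the elements of a finite type that lie in `A`. -/
noncomputable def density {G : Type*} (A : Set G) : ℝ := A.ncard / Nat.card G

lemma density_univ_pi {ι : Type*} [Fintype ι] {G : ι → Type*} (A : ∀ i, Set (G i)) :
    density (Set.univ.pi A) = ∏ i, density (A i) := by
  have hcard : (Set.univ.pi A).ncard = ∏ i, (A i).ncard := by
    simp only [← Nat.card_coe_set_eq]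
    rw [Nat.card_congr (Equiv.Set.univPi A), Nat.card_pi]
  simp only [density]
  rw [hcard, Nat.card_pi, Nat.cast_prod, Nat.cast_prod, Finset.prod_div_distrib]

lemma density_compl {G : Type*} [Finite G] [Nonempty G] (A : Set G) :
    density Aᶜ = 1 - density A := by
  have hG : (Nat.card G : ℝ) ≠ 0 := Nat.cast_ne_zero.2 Nat.card_pos.ne'
  simp only [density]
  rw [eq_sub_iff_add_eq, ← add_div, add_comm, ← Nat.cast_add, Set.ncard_add_ncard_compl,
    div_self hG]

lemma sum_card_filter_add_mem {X G : Type*} [AddGroup G] [Fintype G] (Ω : Finset X) (f : X → G)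
    (A : Set G) :
    ∑ y, {x ∈ Ω | f x + y ∈ A}.card = Ω.card * A.ncard := by
  have hfiber : ∀ x, {y | f x + y ∈ A}.ncard = A.ncard := fun x =>
    Set.ncard_preimage_of_injective_subset_range (add_right_injective (f x)) fun a _ =>
      ⟨-f x + a, add_neg_cancel_left _ _⟩
  simp only [Finset.card_filter]
  rw [Finset.sum_comm, Finset.sum_const_nat fun x _ => ?_]
  rw [← Finset.card_filter, ← hfiber x, Set.ncard_eq_toFinset_card', Set.toFinset_ofPred]

section Averaging

variable {H G : Type*} [AddCommGroup H] [DecidableEq H] [AddGroup G] [Finite G] {φ : H →+ G}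
  {σ : G → H} {Ω : Finset H} {E : ℝ}

lemma card_mul_density_le (hσ : Function.RightInverse σ φ)
    (hE : ∀ y, ({x ∈ Ω | x + σ y ∉ Ω}.card : ℝ) ≤ E) (A : Set G) :
    Ω.card * density A ≤ {x ∈ Ω | φ x ∈ A}.card + E := by
  have := Fintype.ofFinite G
  have hshift : ∀ y, ({x ∈ Ω | φ x + y ∈ A}.card : ℝ) ≤ {x ∈ Ω | φ x ∈ A}.card + E := by
    intro y
    have hsub : {x ∈ Ω | φ x + y ∈ A} ⊆ {x ∈ Ω | x + σ y ∈ Ω ∧ φ (x + σ y) ∈ A} ∪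
        {x ∈ Ω | x + σ y ∉ Ω} := by
      intro x hx
      simp only [Finset.mem_union, Finset.mem_filter, map_add, hσ y] at hx ⊢
      tauto
    have hinj : {x ∈ Ω | x + σ y ∈ Ω ∧ φ (x + σ y) ∈ A}.card ≤ {x ∈ Ω | φ x ∈ A}.card :=
      Finset.card_le_card_of_injOn (· + σ y) (fun x hx => by simp_all)
        (add_left_injective (σ y)).injOn
    have hcard : ({x ∈ Ω | φ x + y ∈ A}.card : ℝ) ≤
        {x ∈ Ω | φ x ∈ A}.card + {x ∈ Ω | x + σ y ∉ Ω}.card := by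
      exact_mod_cast (Finset.card_le_card hsub).trans
        ((Finset.card_union_le _ _).trans (Nat.add_le_add_right hinj _))
    exact hcard.trans (add_le_add_right (hE y) _)
  have hG : (0 : ℝ) < Nat.card G := Nat.cast_pos.2 Nat.card_pos
  rw [density, ← mul_div_assoc, div_le_iff₀ hG, ← Nat.cast_mul, ← sum_card_filter_add_mem Ω φ,
    Nat.cast_sum, mul_comm, Nat.card_eq_fintype_card, ← Finset.card_univ, ← nsmul_eq_mul]
  exact Finset.sum_le_card_nsmul _ _ _ fun y _ => hshift y

/-- If `Ω` is almost invariant under translation by a full set of representatives of the finite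
quotient `G` of `H`, then `Ω` is equidistributed in `G`. -/
lemma abs_card_filter_sub_card_mul_density_le (hσ : Function.RightInverse σ φ)
    (hE : ∀ y, ({x ∈ Ω | x + σ y ∉ Ω}.card : ℝ) ≤ E) (A : Set G) :
    |({x ∈ Ω | φ x ∈ A}.card : ℝ) - Ω.card * density A| ≤ E := by
  have hcompl : Ω.card * (1 - density A) ≤ {x ∈ Ω | φ x ∉ A}.card + E := by
    simpa only [density_compl, Set.mem_compl_iff] using card_mul_density_le hσ hE Aᶜ
  have hpart : ({x ∈ Ω | φ x ∈ A}.card : ℝ) + {x ∈ Ω | φ x ∉ A}.card = Ω.card := by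
    exact_mod_cast Finset.card_filter_add_card_filter_not (s := Ω) fun x => φ x ∈ A
  rw [abs_le]
  constructor <;> linarith [card_mul_density_le hσ hE A]

end Averaging

lemma exists_int_lt_prod_and_cast_eq {ι J : Type*} [Fintype J] {a : J → ℕ}
    (ha : Pairwise fun i j => (a i).Coprime (a j)) (ha0 : ∀ j, a j ≠ 0)
    (y : ∀ j, ι → ZMod (a j)) :
    ∃ s : ι → ℤ, (∀ i, s i ∈ Set.Ico 0 (∏ j, (a j : ℤ))) ∧ ∀ j i, (s i : ZMod (a j)) = y j i := by
  have : NeZero (∏ j, a j) := ⟨Finset.prod_ne_zero_iff.2 fun j _ => ha0 j⟩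
  let e := ZMod.prodEquivPi a ha
  refine ⟨fun i => (e.symm fun j => y j i).val, fun i => ⟨Int.natCast_nonneg _, ?_⟩, fun j i => ?_⟩
  · rw [← Nat.cast_prod]
    exact Nat.cast_lt.2 (ZMod.val_lt _)
  · have hcast := map_natCast e (e.symm fun j => y j i).val
    rw [ZMod.natCast_val, ZMod.cast_id, e.apply_symm_apply] at hcast
    simpa using (congrFun hcast j).symm

section Cubes

variable {k : ℕ}

/-- The vertex `x₀ + ω₁ x₁ + ⋯ + ω_k x_k` of the `k`-dimensional cube with base point `x₀` and
sides `x₁, …, x_k`, as a linear form in `x`. -/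
noncomputable def cubeForm {R : Type*} [AddCommGroup R] (ω : Fin k → Bool) :
    (Fin (k + 1) → R) →+ R :=
  Pi.evalAddMonoidHom _ 0 + ∑ i, if ω i then Pi.evalAddMonoidHom _ i.succ else 0

lemma cubeForm_apply {R : Type*} [AddCommGroup R] (ω : Fin k → Bool) (x : Fin (k + 1) → R) :
    cubeForm ω x = x 0 + ∑ i, if ω i then x i.succ else 0 := by
  simp only [cubeForm, AddMonoidHom.add_apply, AddMonoidHom.finsetSum_apply,
    Pi.evalAddMonoidHom_apply]
  congr 1
  refine Finset.sum_congr rfl fun i _ => ?_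
  split_ifs <;> rfl

lemma map_cubeForm {R R' : Type*} [AddCommGroup R] [AddCommGroup R'] (f : R →+ R')
    (ω : Fin k → Bool) (x : Fin (k + 1) → R) : f (cubeForm ω x) = cubeForm ω fun i => f (x i) := by
  simp only [cubeForm_apply, map_add, map_sum, apply_ite f, map_zero]

lemma cubeForm_mem_Ico {s : Fin (k + 1) → ℤ} {d : ℤ} (hs : ∀ i, s i ∈ Set.Ico 0 d)
    (ω : Fin k → Bool) : cubeForm ω s ∈ Set.Ico 0 ((k + 1) * d) := by
  have hterm : ∀ i : Fin k, (if ω i then s i.succ else 0) ∈ Set.Icc 0 d := by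
    intro i
    have := hs i.succ
    split_ifs
    · exact ⟨this.1, this.2.le⟩
    · exact ⟨le_rfl, this.1.trans this.2.le⟩
  have hupper := Finset.sum_le_card_nsmul Finset.univ _ d fun i _ => (hterm i).2
  have hlower := Finset.sum_nonneg fun i (_ : i ∈ Finset.univ) => (hterm i).1
  rw [Finset.card_univ, Fintype.card_fin, nsmul_eq_mul] at hupper
  rw [cubeForm_apply]
  constructor <;> linarith [(hs 0).1, (hs 0).2]

/-- The `k`-dimensional cubes, possibly degenerate, all of whose vertices lie in `[1, m]`. -/
noncomputable def cubeSet (k m : ℕ) : Finset (Fin (k + 1) → ℤ) :=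
  {x ∈ Fintype.piFinset fun _ => Finset.Icc (-m : ℤ) m | ∀ ω, cubeForm ω x ∈ Finset.Icc 1 (m : ℤ)}

lemma cubeForm_false {R : Type*} [AddCommGroup R] (x : Fin (k + 1) → R) :
    cubeForm (fun _ => false) x = x 0 := by
  simp [cubeForm_apply]

lemma cubeForm_single {R : Type*} [AddCommGroup R] (i : Fin k) (x : Fin (k + 1) → R) :
    cubeForm (fun j => decide (j = i)) x = x 0 + x i.succ := by
  simp [cubeForm_apply]

lemma mem_cubeSet {m : ℕ} {x : Fin (k + 1) → ℤ} :
    x ∈ cubeSet k m ↔ ∀ ω, cubeForm ω x ∈ Finset.Icc 1 (m : ℤ) := by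
  simp only [cubeSet, Finset.mem_filter, Fintype.mem_piFinset, Finset.mem_Icc,
    and_iff_right_iff_imp]
  intro hx
  have h0 := hx fun _ => false
  rw [cubeForm_false] at h0
  refine Fin.cases ⟨by omega, h0.2⟩ fun i => ?_
  have hi := hx fun j => decide (j = i)
  rw [cubeForm_single] at hi
  constructor <;> omega

lemma card_cubeSet_filter_lt_cubeForm_le (k m l : ℕ) (ω : Fin k → Bool) :
    {x ∈ cubeSet k m | (m : ℤ) - l < cubeForm ω x}.card ≤ l * (2 * m + 1) ^ k := by
  calc {x ∈ cubeSet k m | (m : ℤ) - l < cubeForm ω x}.card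
      ≤ (Finset.Ioc ((m : ℤ) - l) m ×ˢ
          Fintype.piFinset fun _ : Fin k => Finset.Icc (-m : ℤ) m).card := by
        refine Finset.card_le_card_of_injOn (fun x => (cubeForm ω x, Fin.tail x)) ?_ ?_
        · intro x hx
          have hx := Finset.mem_filter.1 hx
          have hbox := (Finset.mem_filter.1 hx.1).1
          have hω := Finset.mem_Icc.1 (mem_cubeSet.1 hx.1 ω)
          simp only [Finset.coe_product, Set.mem_prod, Finset.mem_coe, Finset.mem_Ioc,
            Fintype.mem_piFinset]
          exact ⟨⟨hx.2, hω.2⟩, fun i => Fintype.mem_piFinset.1 hbox i.succ⟩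
        · intro x _ y _ hxy
          obtain ⟨hform, htail⟩ := Prod.mk.inj hxy
          have hsucc : ∀ i : Fin k, x i.succ = y i.succ := congrFun htail
          simp only [cubeForm_apply, hsucc, add_left_inj] at hform
          exact funext (Fin.cases hform hsucc)
    _ = l * (2 * m + 1) ^ k := by
        rw [Finset.card_product, Fintype.card_piFinset_const, Int.card_Ioc, Int.card_Icc]
        congr <;> omega

lemma card_cubeSet_filter_add_notMem_le {m l : ℕ} {s : Fin (k + 1) → ℤ}
    (hs : ∀ ω, cubeForm ω s ∈ Set.Icc 0 (l : ℤ)) :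
    {x ∈ cubeSet k m | x + s ∉ cubeSet k m}.card ≤ 2 ^ k * (l * (2 * m + 1) ^ k) := by
  have hsub : {x ∈ cubeSet k m | x + s ∉ cubeSet k m} ⊆
      Finset.univ.biUnion fun ω => {x ∈ cubeSet k m | (m : ℤ) - l < cubeForm ω x} := by
    intro x hx
    obtain ⟨hx, hxs⟩ := Finset.mem_filter.1 hx
    simp only [mem_cubeSet, not_forall, map_add, Finset.mem_Icc, not_and, not_le] at hx hxs
    obtain ⟨ω, hω⟩ := hxs
    obtain ⟨hl, hu⟩ := hs ω
    have h1 := (hx ω).1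
    have h2 := hω (by omega)
    simp only [Finset.mem_biUnion, Finset.mem_univ, true_and, Finset.mem_filter, mem_cubeSet,
      Finset.mem_Icc]
    exact ⟨ω, hx, by omega⟩
  calc {x ∈ cubeSet k m | x + s ∉ cubeSet k m}.card
      ≤ ∑ ω, {x ∈ cubeSet k m | (m : ℤ) - l < cubeForm ω x}.card :=
        (Finset.card_le_card hsub).trans Finset.card_biUnion_le
    _ ≤ ∑ _ω : Fin k → Bool, l * (2 * m + 1) ^ k :=
        Finset.sum_le_sum fun ω _ => card_cubeSet_filter_lt_cubeForm_le k m l ω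
    _ = 2 ^ k * (l * (2 * m + 1) ^ k) := by simp

lemma pow_le_card_cubeSet {m q : ℕ} (hq : (k + 1) * q ≤ m) : q ^ (k + 1) ≤ (cubeSet k m).card := by
  let e : Fin (k + 1) → ℤ := Pi.single 0 1
  have he : ∀ ω : Fin k → Bool, cubeForm ω e = 1 := by simp [cubeForm_apply, e]
  calc q ^ (k + 1) = (Fintype.piFinset fun _ : Fin (k + 1) => Finset.Ico 0 (q : ℤ)).card := by
        rw [Fintype.card_piFinset_const, Int.card_Ico, sub_zero, Int.toNat_natCast]
    _ ≤ (cubeSet k m).card := by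
        refine Finset.card_le_card_of_injOn (· + e) ?_ (add_left_injective e).injOn
        intro x hx
        have hx : ∀ i, x i ∈ Set.Ico 0 (q : ℤ) := by simpa using hx
        refine Finset.mem_coe.2 (mem_cubeSet.2 fun ω => Finset.mem_Icc.2 ?_)
        obtain ⟨hl, hu⟩ := cubeForm_mem_Ico hx ω
        have : ((k : ℤ) + 1) * q ≤ m := by exact_mod_cast hq
        rw [map_add, he]
        constructor <;> omega

/-- The implied constant in the equidistribution of `cubeSet k m` in residue classes. -/
noncomputable def cubeConst (k : ℕ) : ℝ := (k + 1) * 6 ^ k * (2 * (k + 1)) ^ (k + 1)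

lemma pow_le_mul_card_cubeSet {m : ℕ} (hm : k + 1 ≤ m) :
    (m : ℝ) ^ (k + 1) ≤ (2 * (k + 1)) ^ (k + 1) * (cubeSet k m).card := by
  have hq : m ≤ 2 * (k + 1) * (m / (k + 1)) := by
    have h1 := Nat.div_add_mod m (k + 1)
    have h2 : m % (k + 1) < k + 1 := Nat.mod_lt m k.succ_pos
    have h3 : k + 1 ≤ (k + 1) * (m / (k + 1)) :=
      Nat.le_mul_of_pos_right _ (Nat.div_pos hm k.succ_pos)
    rw [mul_assoc]
    omega
  have hcard := pow_le_card_cubeSet (Nat.mul_div_le m (k + 1))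
  calc (m : ℝ) ^ (k + 1) ≤ ((2 * (k + 1) * (m / (k + 1)) : ℕ) : ℝ) ^ (k + 1) := by gcongr
    _ = (2 * (k + 1)) ^ (k + 1) * ((m / (k + 1)) ^ (k + 1) : ℕ) := by
        push_cast
        rw [mul_pow]
    _ ≤ (2 * (k + 1)) ^ (k + 1) * (cubeSet k m).card := by gcongr

lemma card_cubeSet_filter_add_notMem_le_mul_card {m d : ℕ} (hm : k + 1 ≤ m)
    {s : Fin (k + 1) → ℤ} (hs : ∀ i, s i ∈ Set.Ico 0 (d : ℤ)) :
    ({x ∈ cubeSet k m | x + s ∉ cubeSet k m}.card : ℝ) ≤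
      cubeConst k * d / m * (cubeSet k m).card := by
  have hm1 : (1 : ℝ) ≤ m := Nat.one_le_cast.2 ((Nat.le_add_left 1 k).trans hm)
  have hform : ∀ ω : Fin k → Bool, cubeForm ω s ∈ Set.Icc 0 (((k + 1) * d : ℕ) : ℤ) := by
    intro ω
    push_cast
    exact Set.Ico_subset_Icc_self (cubeForm_mem_Ico hs ω)
  have hlow : (m : ℝ) ^ k ≤ (2 * (k + 1)) ^ (k + 1) * (cubeSet k m).card / m := by
    rw [le_div_iff₀ (by positivity), ← pow_succ]
    exact pow_le_mul_card_cubeSet hm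
  calc ({x ∈ cubeSet k m | x + s ∉ cubeSet k m}.card : ℝ)
      ≤ 2 ^ k * ((k + 1) * d * (2 * m + 1) ^ k) := by
        exact_mod_cast card_cubeSet_filter_add_notMem_le hform
    _ ≤ 2 ^ k * ((k + 1) * d * (3 * m) ^ k) := by gcongr; linarith
    _ = (k + 1) * d * 6 ^ k * m ^ k := by
        rw [mul_pow, show (6 : ℝ) = 2 * 3 by norm_num, mul_pow]
        ring
    _ ≤ (k + 1) * d * 6 ^ k * ((2 * (k + 1)) ^ (k + 1) * (cubeSet k m).card / m) := by gcongr
    _ = cubeConst k * d / m * (cubeSet k m).card := by rw [cubeConst]; ring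

/-- The joint reductions of an integer vector modulo the `a j`. -/
def residues {ι J : Type*} (a : J → ℕ) : (ι → ℤ) →+ ∀ j, ι → ZMod (a j) where
  toFun x _ i := x i
  map_zero' := by ext; simp
  map_add' x y := by ext; simp

lemma abs_card_cubeSet_filter_residues_sub_le {J : Type*} [Fintype J] {a : J → ℕ}
    (ha : Pairwise fun i j => (a i).Coprime (a j)) (ha0 : ∀ j, a j ≠ 0) {m : ℕ} (hm : k + 1 ≤ m)
    (A : ∀ j, Set (Fin (k + 1) → ZMod (a j))) :
    |({x ∈ cubeSet k m | residues a x ∈ Set.univ.pi A}.card : ℝ)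
        - (cubeSet k m).card * ∏ j, density (A j)|
      ≤ cubeConst k * (∏ j, a j : ℕ) / m * (cubeSet k m).card := by
  have (j : J) : NeZero (a j) := ⟨ha0 j⟩
  choose σ hσbox hσ using exists_int_lt_prod_and_cast_eq (ι := Fin (k + 1)) ha ha0
  have hright : Function.RightInverse σ (residues a) := fun y => funext fun j => funext (hσ y j)
  rw [← density_univ_pi]
  exact abs_card_filter_sub_card_mul_density_le hright
    (fun y => card_cubeSet_filter_add_notMem_le_mul_card hm fun i => by simpa using hσbox y i) _

end Cubes

section Density

variable {ι G : Type*}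

lemma density_eq_sum_indicator [Fintype G] (A : Set G) :
    density A = (∑ x, A.indicator 1 x) / Nat.card G := by
  rw [density, Set.ncard_eq_toFinset_card', Finset.card_eq_sum_ones, Nat.cast_sum]
  simp [Set.indicator_apply]

lemma density_biUnion_le (S : Finset ι) (A : ι → Set G) :
    density (⋃ i ∈ S, A i) ≤ ∑ i ∈ S, density (A i) := by
  simp only [density]
  rw [← Finset.sum_div, ← Nat.cast_sum]
  gcongr
  exact Finset.set_ncard_biUnion_le S A

lemma two_mul_sum_density_sub_le_density_biUnion [Finite G] (S : Finset ι) (A : ι → Set G) :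
    2 * ∑ i ∈ S, density (A i) - ∑ i ∈ S, ∑ j ∈ S, density (A i ∩ A j)
      ≤ density (⋃ i ∈ S, A i) := by
  have := Fintype.ofFinite G
  have hpoint : ∀ x, 2 * ∑ i ∈ S, (A i).indicator (1 : G → ℝ) x
      - ∑ i ∈ S, ∑ j ∈ S, (A i ∩ A j).indicator 1 x ≤ (⋃ i ∈ S, A i).indicator 1 x := by
    intro x
    simp only [Set.inter_indicator_one, Pi.mul_apply, ← Finset.mul_sum, ← Finset.sum_mul]
    by_cases hx : x ∈ ⋃ i ∈ S, A i
    · rw [Set.indicator_of_mem hx, Pi.one_apply]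
      nlinarith [sq_nonneg (∑ i ∈ S, (A i).indicator (1 : G → ℝ) x - 1)]
    · rw [Set.indicator_of_notMem hx]
      have hzero : ∑ i ∈ S, (A i).indicator (1 : G → ℝ) x = 0 :=
        Finset.sum_eq_zero fun i hi =>
          Set.indicator_of_notMem (fun hxi => hx (Set.mem_biUnion hi hxi)) _
      simp [hzero]
  simp only [density_eq_sum_indicator, ← Finset.sum_div]
  rw [← mul_div_assoc, ← sub_div]
  gcongr
  rw [Finset.sum_comm, Finset.mul_sum]
  simp only [Finset.sum_comm (t := (Finset.univ : Finset G))]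
  rw [← Finset.sum_sub_distrib]
  exact Finset.sum_le_sum fun x _ => hpoint x

lemma density_preimage_singleton {G H : Type*} [AddGroup G] [AddGroup H] [Finite G] {f : G →+ H}
    (hf : Function.Surjective f) (h : H) : density (f ⁻¹' {h}) = 1 / Nat.card H := by
  have hfiber : (f ⁻¹' {h}).ncard = Nat.card f.ker :=
    Nat.card_congr (f.fiberEquivKerOfSurjective hf h)
  have hcard : Nat.card f.ker * Nat.card H = Nat.card G := by
    rw [← f.ker.card_mul_index, AddSubgroup.index_ker, AddMonoidHom.range_eq_top.2 hf,
      AddSubgroup.card_top]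
  have hker : (Nat.card f.ker : ℝ) ≠ 0 := Nat.cast_ne_zero.2 Nat.card_pos.ne'
  rw [density, hfiber, ← hcard, Nat.cast_mul, ← div_div, div_self hker]

end Density

section HitSet

variable {k : ℕ} {R : Type*} [AddCommGroup R]

lemma cubeForm_surjective (ω : Fin k → Bool) :
    Function.Surjective (cubeForm ω : (Fin (k + 1) → R) →+ R) := fun a =>
  ⟨Pi.single 0 a, by simp [cubeForm_apply]⟩

lemma exists_cubeForm_eq_and_eq_of_apply_ne {ω ω' : Fin k → Bool} {i : Fin k} (hi : ω i = false)
    (hi' : ω' i = true) (a b : R) :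
    ∃ x : Fin (k + 1) → R, cubeForm ω x = a ∧ cubeForm ω' x = b := by
  refine ⟨Pi.single 0 a + Pi.single i.succ (b - a), ?_, ?_⟩ <;>
    simp [cubeForm_apply, Pi.single_apply, Fin.succ_ne_zero, Finset.sum_ite, hi, hi']

lemma cubeForm_prod_surjective {ω ω' : Fin k → Bool} (h : ω ≠ ω') :
    Function.Surjective
      ((cubeForm ω).prod (cubeForm ω') : (Fin (k + 1) → R) →+ R × R) := by
  rintro ⟨a, b⟩
  obtain ⟨i, hi⟩ := Function.ne_iff.1 h
  cases hω : ω i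
  · have hω' : ω' i = true := by simpa [hω] using hi.symm
    obtain ⟨x, ha, hb⟩ := exists_cubeForm_eq_and_eq_of_apply_ne hω hω' a b
    exact ⟨x, Prod.ext ha hb⟩
  · have hω' : ω' i = false := by simpa [hω] using hi.symm
    obtain ⟨x, hb, ha⟩ := exists_cubeForm_eq_and_eq_of_apply_ne hω' hω b a
    exact ⟨x, Prod.ext ha hb⟩

variable (S : Finset (Fin k → Bool)) (c : R)

/-- The cubes having a vertex indexed by `S` at `c`. -/
def hitSet : Set (Fin (k + 1) → R) := ⋃ ω ∈ S, cubeForm ω ⁻¹' {c}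

lemma mem_hitSet {S : Finset (Fin k → Bool)} {c : R} {x : Fin (k + 1) → R} :
    x ∈ hitSet S c ↔ ∃ ω ∈ S, cubeForm ω x = c := by
  simp [hitSet]

variable [Finite R]

lemma density_preimage_cubeForm (ω : Fin k → Bool) :
    density (cubeForm ω ⁻¹' {c} : Set (Fin (k + 1) → R)) = 1 / Nat.card R :=
  density_preimage_singleton (cubeForm_surjective ω) c

lemma density_preimage_cubeForm_inter {ω ω' : Fin k → Bool} (h : ω ≠ ω') :
    density (cubeForm ω ⁻¹' {c} ∩ cubeForm ω' ⁻¹' {c} : Set (Fin (k + 1) → R))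
      = 1 / (Nat.card R : ℝ) ^ 2 := by
  have hprod : (cubeForm ω ⁻¹' {c} ∩ cubeForm ω' ⁻¹' {c} : Set (Fin (k + 1) → R))
      = (cubeForm ω).prod (cubeForm ω') ⁻¹' {(c, c)} := by
    ext x
    simp
  rw [hprod, density_preimage_singleton (cubeForm_prod_surjective h), Nat.card_prod, Nat.cast_mul,
    sq]

lemma density_hitSet_le : density (hitSet S c) ≤ S.card / Nat.card R := by
  refine (density_biUnion_le S _).trans_eq ?_
  simp only [density_preimage_cubeForm, Finset.sum_const, nsmul_eq_mul, mul_one_div]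

lemma le_density_hitSet :
    S.card / Nat.card R - (S.card / Nat.card R : ℝ) ^ 2 ≤ density (hitSet S c) := by
  have hpair : ∀ ω ω' : Fin k → Bool,
      density (cubeForm ω ⁻¹' {c} ∩ cubeForm ω' ⁻¹' {c} : Set (Fin (k + 1) → R))
        ≤ (if ω = ω' then 1 / (Nat.card R : ℝ) else 0) + 1 / (Nat.card R : ℝ) ^ 2 := by
    intro ω ω'
    split_ifs with h
    · rw [h, Set.inter_self, density_preimage_cubeForm]
      exact le_add_of_nonneg_right (by positivity)
    · rw [density_preimage_cubeForm_inter c h, zero_add]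
  have hsum : ∑ ω ∈ S, ∑ ω' ∈ S,
      density (cubeForm ω ⁻¹' {c} ∩ cubeForm ω' ⁻¹' {c} : Set (Fin (k + 1) → R))
        ≤ S.card / Nat.card R + (S.card / Nat.card R : ℝ) ^ 2 := by
    refine (Finset.sum_le_sum fun ω _ => Finset.sum_le_sum fun ω' _ => hpair ω ω').trans_eq ?_
    simp only [Finset.sum_add_distrib, Finset.sum_ite_eq, Finset.sum_const, nsmul_eq_mul,
      Finset.sum_ite_mem, Finset.inter_self]
    ring
  refine le_trans ?_ (two_mul_sum_density_sub_le_density_biUnion S _)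
  simp only [density_preimage_cubeForm, Finset.sum_const, nsmul_eq_mul, mul_one_div]
  linarith

end HitSet

section CubeSieve

variable {k m : ℕ} {P : Finset ℕ}

lemma density_mem_Icc {G : Type*} [Finite G] (A : Set G) : density A ∈ Set.Icc 0 1 :=
  ⟨by unfold density; positivity,
    div_le_one_of_le₀ (Nat.cast_le.2 (Set.ncard_le_card A)) (Nat.cast_nonneg _)⟩

lemma abs_sum_cubeSet_prod_indicator_sub_le (hP : (P : Set ℕ).Pairwise Nat.Coprime)
    (hP0 : ∀ p ∈ P, p ≠ 0) (hm : k + 1 ≤ m) (A : ∀ p : ℕ, Set (Fin (k + 1) → ZMod p)) :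
    |∑ x ∈ cubeSet k m, ∏ p ∈ P, (A p).indicator (1 : (Fin (k + 1) → ZMod p) → ℝ) (fun i => x i)
        - (cubeSet k m).card * ∏ p ∈ P, density (A p)|
      ≤ cubeConst k * (∏ p ∈ P, p : ℕ) / m * (cubeSet k m).card := by
  have hcop : Pairwise fun p q : P => (p : ℕ).Coprime q := fun p q hpq =>
    hP p.2 q.2 (Subtype.coe_injective.ne hpq)
  have hequi := abs_card_cubeSet_filter_residues_sub_le hcop (fun p => hP0 p p.2) hm
    fun p => A p
  have hcount : ∑ x ∈ cubeSet k m,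
      ∏ p ∈ P, (A p).indicator (1 : (Fin (k + 1) → ZMod p) → ℝ) (fun i => x i)
      = {x ∈ cubeSet k m |
          residues (fun p : P => (p : ℕ)) x ∈ Set.univ.pi fun p : P => A p}.card := by
    simp only [Set.indicator_apply, Pi.one_apply, Finset.prod_boole, Finset.sum_boole]
    congr 2
    ext x
    simp [residues]
  rwa [Finset.prod_coe_sort P fun p => density (A p), Finset.prod_coe_sort P fun p => p,
    ← hcount] at hequi

lemma sum_range_succ_choose_le {n : ℕ} {Z : ℝ} (hZ : 1 ≤ Z) (hn : n ≤ Z) (r : ℕ) :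
    ∑ j ∈ Finset.range (r + 1), (n.choose j : ℝ) ≤ (r + 1) * Z ^ r := by
  have hterm : ∀ j ∈ Finset.range (r + 1), (n.choose j : ℝ) ≤ Z ^ r := fun j hj => by
    calc (n.choose j : ℝ) ≤ (n : ℝ) ^ j := by exact_mod_cast Nat.choose_le_pow n j
      _ ≤ Z ^ j := by gcongr
      _ ≤ Z ^ r := pow_le_pow_right₀ hZ (Nat.lt_succ_iff.1 (Finset.mem_range.1 hj))
  simpa using Finset.sum_le_card_nsmul _ _ _ hterm

lemma abs_sum_cubeSet_sieve_sub_le (hP : (P : Set ℕ).Pairwise Nat.Coprime)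
    (hP0 : ∀ p ∈ P, p ≠ 0) {Z : ℝ} (hPZ : ∀ p ∈ P, (p : ℝ) ≤ Z) (hcard : P.card ≤ Z)
    (hZ : 1 ≤ Z) (hm : k + 1 ≤ m) (A : ∀ p : ℕ, Set (Fin (k + 1) → ZMod p)) (r : ℕ) :
    |∑ x ∈ cubeSet k m,
          ∏ p ∈ P, (1 - (A p).indicator (1 : (Fin (k + 1) → ZMod p) → ℝ) (fun i => x i))
        - (cubeSet k m).card * ∏ p ∈ P, (1 - density (A p))|
      ≤ (cubeSet k m).card * ((r + 1) * Z ^ (2 * r) * cubeConst k / m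
          + 2 * ((1 / 2) ^ r * Real.exp (2 * ∑ p ∈ P, density (A p)))) := by
  have hdens : ∀ p ∈ P, density (A p) ∈ Set.Icc 0 1 := fun p hp =>
    have : NeZero p := ⟨hP0 p hp⟩
    density_mem_Icc (A p)
  have hprod : ∀ D ⊆ P, D.card ≤ r → ((∏ p ∈ D, p : ℕ) : ℝ) ≤ Z ^ r := fun D hD hDr => by
    rw [Nat.cast_prod]
    calc ∏ p ∈ D, (p : ℝ) ≤ ∏ _p ∈ D, Z :=
          Finset.prod_le_prod (fun p _ => Nat.cast_nonneg p) fun p hp => hPZ p (hD hp)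
      _ = Z ^ D.card := Finset.prod_const Z
      _ ≤ Z ^ r := pow_le_pow_right₀ hZ hDr
  have hconst : 0 ≤ cubeConst k := by unfold cubeConst; positivity
  have hsieve := abs_sum_prod_one_sub_sub_le (r := r) (P := P) (Ω := cubeSet k m)
    (g := fun p x => (A p).indicator 1 fun i => (x i : ZMod p)) (ρ := fun p => density (A p))
    (B := cubeConst k * Z ^ r / m * (cubeSet k m).card)
    (fun p _ x _ => ⟨Set.indicator_nonneg (fun _ _ => zero_le_one) _,
      Set.indicator_le_self' (fun _ _ => zero_le_one) _⟩)
    hdens fun D hD hDr =>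
      (abs_sum_cubeSet_prod_indicator_sub_le (hP.mono hD) (fun p hp => hP0 p (hD hp)) hm A).trans
        (by gcongr; exact hprod D hD hDr)
  have hesymm : (P.val.map fun p => density (A p)).esymm r
      ≤ (1 / 2) ^ r * Real.exp (2 * ∑ p ∈ P, density (A p)) :=
    esymm_le_exp (by simpa using fun p hp => (hdens p hp).1) r
  refine hsieve.trans ?_
  calc _ ≤ (r + 1) * Z ^ r * (cubeConst k * Z ^ r / m * (cubeSet k m).card)
        + 2 * (cubeSet k m).card * ((1 / 2) ^ r * Real.exp (2 * ∑ p ∈ P, density (A p))) := by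
        gcongr
        exact sum_range_succ_choose_le hZ hcard r
    _ = _ := by ring

end CubeSieve

section LocalFactor

variable {t ρ : ℝ} {s : ℕ}

lemma one_sub_pow_le (ht : t ∈ Set.Icc 0 1) (s : ℕ) :
    (1 - t) ^ s ≤ 1 - s * t + (s * t) ^ 2 := by
  induction s with
  | zero => simp
  | succ s ih =>
    have hstep := mul_le_mul_of_nonneg_right ih (sub_nonneg.2 ht.2)
    have hcube : 0 ≤ (s : ℝ) ^ 2 * t ^ 3 := by have := ht.1; positivity
    have hsq : 0 ≤ (s : ℝ) * t ^ 2 := by positivity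
    rw [pow_succ]
    push_cast
    nlinarith [sq_nonneg t]

lemma abs_div_one_sub_pow_sub_one_le (ht : t ∈ Set.Icc 0 (1 / 2)) (hle : ρ ≤ s * t)
    (hge : s * t - (s * t) ^ 2 ≤ ρ) :
    |(1 - ρ) / (1 - t) ^ s - 1| ≤ 2 ^ s * (s * t) ^ 2 := by
  have hbern : 1 - s * t ≤ (1 - t) ^ s := by
    have := one_add_mul_le_pow (a := -t) (by linarith [ht.2]) s
    rw [← sub_eq_add_neg] at this
    linarith
  have hupper := one_sub_pow_le ⟨ht.1, by linarith [ht.2]⟩ s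
  have hpos : 0 < (1 - t) ^ s := pow_pos (by linarith [ht.2]) s
  have htwo : 1 ≤ 2 ^ s * (1 - t) ^ s := by
    rw [← mul_pow]
    exact one_le_pow₀ (by linarith [ht.2])
  rw [div_sub_one hpos.ne', abs_div, abs_of_pos hpos, div_le_iff₀ hpos]
  calc |1 - ρ - (1 - t) ^ s| ≤ 1 * (s * t) ^ 2 := by
        rw [abs_le]
        constructor <;> linarith
    _ ≤ (2 ^ s * (1 - t) ^ s) * (s * t) ^ 2 := by gcongr
    _ = 2 ^ s * (s * t) ^ 2 * (1 - t) ^ s := by ring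

end LocalFactor

/-- The function `n ↦ ∏ p/(p-1)·1_{p ∤ Wn + b}`, the product being over `p ∈ P`: a Cramér model with
primes in `P`, along the progression `b mod W`. -/
noncomputable def sieveWeight (P : Finset ℕ) (W : ℕ) (b n : ℤ) : ℝ :=
  ∏ p ∈ P, if (p : ℤ) ∣ W * n + b then 0 else (p : ℝ) / (p - 1)

/-- The residue class of the solutions of `W n + b ≡ 0 mod p`, for `W` coprime to `p`. -/
noncomputable def rootMod (W : ℕ) (b : ℤ) (p : ℕ) : ZMod p := -b * (W : ZMod p)⁻¹

lemma dvd_mul_add_iff_cast_eq_rootMod {W p : ℕ} (hW : W.Coprime p) (b n : ℤ) :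
    (p : ℤ) ∣ W * n + b ↔ (n : ZMod p) = rootMod W b p := by
  have hinv : (W : ZMod p) * (W : ZMod p)⁻¹ = 1 := ZMod.coe_mul_inv_eq_one W hW
  rw [← ZMod.intCast_zmod_eq_zero_iff_dvd, rootMod]
  push_cast
  constructor <;> intro h
  · linear_combination (W : ZMod p)⁻¹ * h - n * hinv
  · rw [h]
    linear_combination -b * hinv

section SieveWeight

variable {k m : ℕ} {P : Finset ℕ} {W : ℕ} (b : ℤ) (S : Finset (Fin k → Bool))

/-- The indicator function of the integer cubes `x` for which `p ∣ W n + b` for some vertex `n` of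
`x` indexed by `S`. -/
noncomputable def hitIndicator (W : ℕ) (p : ℕ) (x : Fin (k + 1) → ℤ) : ℝ :=
  (hitSet S (rootMod W b p)).indicator 1 fun i => x i

lemma prod_ite_dvd_cubeForm {p : ℕ} (hW : W.Coprime p) (a : ℝ) (x : Fin (k + 1) → ℤ) :
    ∏ ω ∈ S, (if (p : ℤ) ∣ W * cubeForm ω x + b then 0 else a)
      = a ^ S.card * (1 - hitIndicator b S W p x) := by
  have hdvd : ∀ ω, (p : ℤ) ∣ W * cubeForm ω x + b ↔
      cubeForm ω (fun i => (x i : ZMod p)) = rootMod W b p := fun ω => by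
    have hmap := map_cubeForm (Int.castAddHom (ZMod p)) ω x
    simp only [Int.coe_castAddHom] at hmap
    rw [dvd_mul_add_iff_cast_eq_rootMod hW, hmap]
  simp only [hdvd]
  by_cases hx : (fun i => (x i : ZMod p)) ∈ hitSet S (rootMod W b p)
  · obtain ⟨ω, hω, hroot⟩ := mem_hitSet.1 hx
    rw [hitIndicator, Set.indicator_of_mem hx, Pi.one_apply, sub_self, mul_zero]
    exact Finset.prod_eq_zero hω (if_pos hroot)
  · have hmiss : ∀ ω ∈ S, cubeForm ω (fun i => (x i : ZMod p)) ≠ rootMod W b p :=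
      fun ω hω hroot => hx (mem_hitSet.2 ⟨ω, hω, hroot⟩)
    rw [Finset.prod_congr rfl fun ω hω => if_neg (hmiss ω hω), Finset.prod_const, hitIndicator,
      Set.indicator_of_notMem hx, sub_zero, mul_one]

lemma prod_sieveWeight_cubeForm (hW : ∀ p ∈ P, W.Coprime p) (x : Fin (k + 1) → ℤ) :
    ∏ ω ∈ S, sieveWeight P W b (cubeForm ω x)
      = (∏ p ∈ P, (p : ℝ) / (p - 1)) ^ S.card * ∏ p ∈ P, (1 - hitIndicator b S W p x) := by
  simp only [sieveWeight]
  rw [Finset.prod_comm, ← Finset.prod_pow, ← Finset.prod_mul_distrib]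
  exact Finset.prod_congr rfl fun p hp => prod_ite_dvd_cubeForm b S (hW p hp) _ x

lemma div_sub_one_mem_Icc {p : ℕ} (hp : 2 ≤ p) :
    (p : ℝ) / (p - 1) ∈ Set.Icc 0 (Real.exp (2 * (1 / p))) := by
  have h2 : (2 : ℝ) ≤ p := by exact_mod_cast hp
  refine ⟨div_nonneg (by linarith) (by linarith), le_trans ?_ (Real.add_one_le_exp _)⟩
  rw [div_le_iff₀ (by linarith), ← sub_nonneg]
  have : (2 * (1 / (p : ℝ)) + 1) * (p - 1) - p = 1 - 2 / p := by field_simp; ring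
  rw [this, sub_nonneg]
  exact div_le_one_of_le₀ h2 (by linarith)

lemma prod_div_sub_one_pow_mem_Icc (hP : ∀ p ∈ P, 2 ≤ p) (s : ℕ) :
    (∏ p ∈ P, (p : ℝ) / (p - 1)) ^ s ∈ Set.Icc 0 (Real.exp (2 * s * ∑ p ∈ P, 1 / (p : ℝ))) := by
  have hnonneg : 0 ≤ ∏ p ∈ P, (p : ℝ) / (p - 1) :=
    Finset.prod_nonneg fun p hp => (div_sub_one_mem_Icc (hP p hp)).1
  refine ⟨pow_nonneg hnonneg s, ?_⟩
  calc (∏ p ∈ P, (p : ℝ) / (p - 1)) ^ s ≤ (∏ p ∈ P, Real.exp (2 * (1 / p))) ^ s :=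
        pow_le_pow_left₀ hnonneg (Finset.prod_le_prod
          (fun p hp => (div_sub_one_mem_Icc (hP p hp)).1)
          fun p hp => (div_sub_one_mem_Icc (hP p hp)).2) s
    _ = Real.exp (2 * s * ∑ p ∈ P, 1 / (p : ℝ)) := by
        rw [← Real.exp_sum, ← Finset.mul_sum, ← Real.exp_nat_mul]
        ring_nf

/-- Inclusion-exclusion bounds the local factors at `p` by `1 + O(p⁻²)`: there the main terms of
`(1 - 1/p)^(-#S)` and of the density of `hitSet` cancel. -/
lemma abs_localFactor_sub_one_le {p : ℕ} (hp : 2 ≤ p) (c : ZMod p) :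
    |((p : ℝ) / (p - 1)) ^ S.card * (1 - density (hitSet S c)) - 1|
      ≤ 2 ^ S.card * S.card ^ 2 * ((p : ℝ) ^ 2)⁻¹ := by
  have : NeZero p := ⟨by omega⟩
  have h2 : (2 : ℝ) ≤ p := by exact_mod_cast hp
  have hle := density_hitSet_le S c
  have hge := le_density_hitSet S c
  rw [Nat.card_zmod, ← mul_one_div] at hle hge
  have hfactor := abs_div_one_sub_pow_sub_one_le
    ⟨by positivity, one_div_le_one_div_of_le two_pos h2⟩ hle hge
  rw [one_sub_div (by linarith), div_pow, div_div_eq_mul_div, mul_comm (1 - _), mul_div_right_comm,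
    ← div_pow, mul_pow, one_div, inv_pow, ← mul_assoc] at hfactor
  exact hfactor

lemma abs_prod_localFactor_sub_one_le (hP : ∀ p ∈ P, 2 ≤ p) (c : ∀ p : ℕ, ZMod p) :
    |(∏ p ∈ P, (p : ℝ) / (p - 1)) ^ S.card * ∏ p ∈ P, (1 - density (hitSet S (c p))) - 1|
      ≤ Real.exp (2 ^ S.card * S.card ^ 2 * ∑ p ∈ P, ((p : ℝ) ^ 2)⁻¹) - 1 := by
  have hexp := Finset.norm_prod_one_add_sub_one_le P fun p =>
    ((p : ℝ) / (p - 1)) ^ S.card * (1 - density (hitSet S (c p))) - 1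
  simp only [add_sub_cancel, Real.norm_eq_abs, Finset.prod_mul_distrib, Finset.prod_pow] at hexp
  refine hexp.trans (sub_le_sub_right (Real.exp_le_exp.2 ?_) 1)
  rw [Finset.mul_sum]
  exact Finset.sum_le_sum fun p hp => abs_localFactor_sub_one_le S (hP p hp) (c p)

lemma sum_density_hitSet_le (hP : ∀ p ∈ P, p ≠ 0) (c : ∀ p : ℕ, ZMod p) :
    ∑ p ∈ P, density (hitSet S (c p)) ≤ S.card * ∑ p ∈ P, 1 / (p : ℝ) := by
  rw [Finset.mul_sum]
  refine Finset.sum_le_sum fun p hp => ?_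
  have : NeZero p := ⟨hP p hp⟩
  simpa [div_eq_mul_inv] using density_hitSet_le S (c p)

/-- The relative error in the sieve estimate for `∑ x, ∏ ω ∈ S, sieveWeight P W b (cubeForm ω x)`
over the cubes in `[1, m]`, when `P` has at most `Z` elements, all of size at most `Z`. Here `s` is
the number of factors, `r` the degree of truncation, and `l` and `q` bound the sums of `1/p` and
`1/p²` over `P`. -/
noncomputable def sieveError (k m r : ℕ) (s Z l q : ℝ) : ℝ :=
  Real.exp (2 * s * l)
      * ((r + 1) * Z ^ (2 * r) * cubeConst k / m + 2 * ((1 / 2) ^ r * Real.exp (2 * s * l)))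
    + (Real.exp (2 ^ s * s ^ 2 * q) - 1)

lemma abs_sum_prod_sieveWeight_sub_card_le (hcop : (P : Set ℕ).Pairwise Nat.Coprime)
    (hP : ∀ p ∈ P, 2 ≤ p) (hW : ∀ p ∈ P, W.Coprime p) {Z : ℝ} (hPZ : ∀ p ∈ P, (p : ℝ) ≤ Z)
    (hcard : P.card ≤ Z) (hZ : 1 ≤ Z) (hm : k + 1 ≤ m) (r : ℕ) :
    |∑ x ∈ cubeSet k m, ∏ ω ∈ S, sieveWeight P W b (cubeForm ω x) - (cubeSet k m).card|
      ≤ (cubeSet k m).card *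
        sieveError k m r S.card Z (∑ p ∈ P, 1 / (p : ℝ)) (∑ p ∈ P, ((p : ℝ) ^ 2)⁻¹) := by
  set Y : ℝ := (∏ p ∈ P, (p : ℝ) / (p - 1)) ^ S.card with hY
  set β : ℝ := ∏ p ∈ P, (1 - density (hitSet S (rootMod W b p)))
  set T : ℝ := ∑ x ∈ cubeSet k m, ∏ p ∈ P, (1 - hitIndicator b S W p x) with hT
  have hP0 : ∀ p ∈ P, p ≠ 0 := fun p hp => by have := hP p hp; omega
  have hYmem : Y ∈ Set.Icc 0 _ := prod_div_sub_one_pow_mem_Icc hP S.card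
  have hsieve : |T - (cubeSet k m).card * β| ≤ _ :=
    abs_sum_cubeSet_sieve_sub_le hcop hP0 hPZ hcard hZ hm (fun p => hitSet S (rootMod W b p)) r
  have hlocal : |Y * β - 1| ≤ _ := abs_prod_localFactor_sub_one_le S hP (rootMod W b)
  have hsplit : ∑ x ∈ cubeSet k m, ∏ ω ∈ S, sieveWeight P W b (cubeForm ω x) - (cubeSet k m).card
      = Y * (T - (cubeSet k m).card * β) + (cubeSet k m).card * (Y * β - 1) := by
    simp only [prod_sieveWeight_cubeForm b S hW]
    rw [← Finset.mul_sum, ← hY, ← hT]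
    ring
  have hdens : 2 * ∑ p ∈ P, density (hitSet S (rootMod W b p))
      ≤ 2 * S.card * ∑ p ∈ P, 1 / (p : ℝ) := by
    rw [mul_assoc]
    exact mul_le_mul_of_nonneg_left (sum_density_hitSet_le S hP0 _) two_pos.le
  have hconst : 0 ≤ cubeConst k := by unfold cubeConst; positivity
  rw [hsplit, sieveError, mul_add, mul_left_comm]
  refine (abs_add_le _ _).trans (add_le_add ?_ ?_)
  · rw [abs_mul, abs_of_nonneg hYmem.1]
    refine mul_le_mul hYmem.2 (hsieve.trans ?_) (abs_nonneg _) (Real.exp_nonneg _)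
    gcongr
  · rw [abs_mul, Nat.abs_cast, Real.rpow_natCast]
    exact mul_le_mul_of_nonneg_left hlocal (Nat.cast_nonneg _)

lemma sieveError_mono {r : ℕ} {s s' Z l l' q q' : ℝ} (hs : 0 ≤ s) (hss' : s ≤ s') (hZ : 0 ≤ Z)
    (hl : 0 ≤ l) (hll' : l ≤ l') (hq : 0 ≤ q) (hqq' : q ≤ q') :
    sieveError k m r s Z l q ≤ sieveError k m r s' Z l' q' := by
  have hconst : 0 ≤ cubeConst k := by unfold cubeConst; positivity
  have hs' : 0 ≤ s' := hs.trans hss'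
  unfold sieveError
  gcongr
  exact one_le_two

end SieveWeight

section GowersNorm

variable {k : ℕ}

lemma gowersProd_ofReal {G : Type*} [AddCommGroup G] (f : G → ℝ) (n : G) (h : Fin k → G) :
    gowersProd k (fun n => (f n : ℂ)) n h = (∏ ω, f (cubeForm ω (Fin.cons n h)) : ℝ) := by
  rw [gowersProd, Complex.ofReal_prod]
  refine Finset.prod_congr rfl fun ω _ => ?_
  rw [Function.iterate_fixed (Complex.conj_ofReal _), cubeForm_apply]
  rfl

lemma gowersTildeU_ofReal {f : ℤ → ℝ} {m : ℕ} (hf : ∀ n ∉ Finset.Icc 1 (m : ℤ), f n = 0) :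
    gowersTildeU k (fun n => (f n : ℂ))
      = (∑ x ∈ cubeSet k m, ∏ ω, f (cubeForm ω x)) ^ ((1 : ℝ) / 2 ^ k) := by
  have hsum : ∑' nh : ℤ × (Fin k → ℤ), gowersProd k (fun n => (f n : ℂ)) nh.1 nh.2
      = ((∑ x ∈ cubeSet k m, ∏ ω, f (cubeForm ω x) : ℝ) : ℂ) := by
    simp only [gowersProd_ofReal]
    rw [Complex.ofReal_sum]
    refine ((Fin.consEquiv fun _ => ℤ).tsum_eq
      fun x => ((∏ ω, f (cubeForm ω x) : ℝ) : ℂ)).trans (tsum_eq_sum fun x hx => ?_)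
    obtain ⟨ω, hω⟩ := not_forall.1 (mt mem_cubeSet.2 hx)
    rw [Finset.prod_eq_zero (Finset.mem_univ ω) (hf _ hω), Complex.ofReal_zero]
  rw [gowersTildeU, hsum, Complex.ofReal_re]

lemma truncN_ofReal (M : ℝ) (f : ℤ → ℝ) :
    truncN M (fun n => (f n : ℂ))
      = fun n => ((if n ∈ Finset.Icc 1 (⌊M⌋₊ : ℤ) then f n else 0 : ℝ) : ℂ) := by
  funext n
  rw [truncN, apply_ite Complex.ofReal, Complex.ofReal_zero]
  refine if_congr ?_ rfl rfl
  rw [Finset.mem_Icc]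
  refine and_congr_right fun hn => ?_
  lift n to ℕ using by omega
  rw [Int.cast_natCast, Nat.cast_le, Nat.le_floor_iff' (by omega)]

lemma gowersTildeU_truncN_ofReal (M : ℝ) (f : ℤ → ℝ) :
    gowersTildeU k (truncN M fun n => (f n : ℂ))
      = (∑ x ∈ cubeSet k ⌊M⌋₊, ∏ ω, f (cubeForm ω x)) ^ ((1 : ℝ) / 2 ^ k) := by
  rw [truncN_ofReal, gowersTildeU_ofReal fun n hn => if_neg hn]
  congr 1
  exact Finset.sum_congr rfl fun x hx =>
    Finset.prod_congr rfl fun ω _ => if_pos (mem_cubeSet.1 hx ω)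

lemma gowersUN_ofReal (M : ℝ) (f : ℤ → ℝ) :
    gowersUN k M (fun n => (f n : ℂ))
      = (∑ x ∈ cubeSet k ⌊M⌋₊, ∏ ω, f (cubeForm ω x)) ^ ((1 : ℝ) / 2 ^ k)
        / (cubeSet k ⌊M⌋₊).card ^ ((1 : ℝ) / 2 ^ k) := by
  have hone := gowersTildeU_truncN_ofReal (k := k) M fun _ => 1
  simp only [Complex.ofReal_one, Finset.prod_const_one, Finset.sum_const, nsmul_one] at hone
  rw [gowersUN, gowersTildeU_truncN_ofReal, hone]

lemma abs_sum_prod_sub_one_le {X I : Type*} [Fintype I] [Nonempty I] (Ω : Finset X)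
    (f : I → X → ℝ) {E : ℝ} (hf : ∀ S : Finset I, |∑ x ∈ Ω, ∏ i ∈ S, f i x - Ω.card| ≤ E) :
    |∑ x ∈ Ω, ∏ i, (f i x - 1)| ≤ 2 ^ Fintype.card I * E := by
  have hsign : ∑ S : Finset I, ∏ i ∈ Finset.univ \ S, (-1 : ℝ) = 0 := by
    have := Finset.prod_add (fun _ : I => (1 : ℝ)) (fun _ => -1) Finset.univ
    simpa using this.symm
  have hexpand : ∑ x ∈ Ω, ∏ i, (f i x - 1) = ∑ S : Finset I,
      (∏ i ∈ Finset.univ \ S, (-1 : ℝ)) * (∑ x ∈ Ω, ∏ i ∈ S, f i x - Ω.card) := by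
    simp only [mul_sub, Finset.sum_sub_distrib, ← Finset.sum_mul, hsign, zero_mul, sub_zero,
      sub_eq_add_neg _ (1 : ℝ), Finset.prod_add, Finset.powerset_univ]
    rw [Finset.sum_comm]
    exact Finset.sum_congr rfl fun S _ => by rw [Finset.mul_sum]; simp only [mul_comm]
  rw [hexpand]
  calc |∑ S : Finset I, (∏ i ∈ Finset.univ \ S, (-1 : ℝ)) * (∑ x ∈ Ω, ∏ i ∈ S, f i x - Ω.card)|
      ≤ ∑ S : Finset I, |∑ x ∈ Ω, ∏ i ∈ S, f i x - Ω.card| := by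
        refine (Finset.abs_sum_le_sum_abs _ _).trans_eq (Finset.sum_congr rfl fun S _ => ?_)
        rw [abs_mul, Finset.abs_prod, abs_neg, abs_one, Finset.prod_const_one, one_mul]
    _ ≤ ∑ _S : Finset I, E := Finset.sum_le_sum fun S _ => hf S
    _ = 2 ^ Fintype.card I * E := by simp

lemma gowersUN_sub_one_le {M : ℝ} {ν : ℤ → ℝ} {E : ℝ} (hE : 0 ≤ E)
    (hν : ∀ S : Finset (Fin k → Bool),
      |∑ x ∈ cubeSet k ⌊M⌋₊, ∏ ω ∈ S, ν (cubeForm ω x) - (cubeSet k ⌊M⌋₊).card|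
        ≤ (cubeSet k ⌊M⌋₊).card * E) :
    gowersUN k M (fun n => (ν n : ℂ) - 1) ≤ (2 ^ 2 ^ k * E) ^ ((1 : ℝ) / 2 ^ k) := by
  have hsum := abs_sum_prod_sub_one_le _ (fun ω x => ν (cubeForm ω x)) hν
  rw [Fintype.card_fun, Fintype.card_bool, Fintype.card_fin, mul_left_comm] at hsum
  have hcast : (fun n => (ν n : ℂ) - 1) = fun n => ((ν n - 1 : ℝ) : ℂ) := by simp
  rw [hcast, gowersUN_ofReal]
  refine div_le_of_le_mul₀ (by positivity) (by positivity) ?_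
  rw [← Real.mul_rpow (by positivity) (Nat.cast_nonneg _), mul_comm _ ((cubeSet k _).card : ℝ)]
  calc (∑ x ∈ cubeSet k ⌊M⌋₊, ∏ ω, (ν (cubeForm ω x) - 1)) ^ ((1 : ℝ) / 2 ^ k)
      ≤ |∑ x ∈ cubeSet k ⌊M⌋₊, ∏ ω, (ν (cubeForm ω x) - 1)| ^ ((1 : ℝ) / 2 ^ k) :=
        (le_abs_self _).trans (Real.abs_rpow_le_abs_rpow _ _)
    _ ≤ _ := Real.rpow_le_rpow (abs_nonneg _) hsum (by positivity)

end GowersNorm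

section Asymptotics

open Filter

lemma exp_sub_one_le_mul_exp (x : ℝ) : Real.exp x - 1 ≤ x * Real.exp x := by
  have h := mul_le_mul_of_nonneg_right (Real.one_sub_le_exp_neg x) (Real.exp_nonneg x)
  rw [← Real.exp_add, neg_add_cancel, Real.exp_zero] at h
  linarith

lemma exp_div_sub_one_le {A w : ℝ} (hA : 0 ≤ A) (hw : 1 ≤ w) :
    Real.exp (A / w) - 1 ≤ A * Real.exp A / w := by
  calc Real.exp (A / w) - 1 ≤ A / w * Real.exp (A / w) := exp_sub_one_le_mul_exp _
    _ ≤ A / w * Real.exp A := by gcongr; exact div_le_self hA hw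
    _ = A * Real.exp A / w := by ring

lemma eventually_exp_mul_equidistribution_error_le (s : ℝ) {κ : ℝ} (hκ : 0 ≤ κ) :
    ∀ᶠ u : ℝ in atTop, ∀ m : ℕ, Real.exp (u ^ 4) ≤ 2 * m →
      Real.exp (2 * s * (1 + u)) * ((⌈u ^ 2⌉₊ + 1) * Real.exp u ^ (2 * ⌈u ^ 2⌉₊) * κ / m)
        ≤ 2 * κ * Real.exp (-u) := by
  filter_upwards [eventually_ge_atTop 10, eventually_ge_atTop (2 * s)] with u hu hus m hm
  have hm0 : (0 : ℝ) < m := by linarith [Real.exp_pos (u ^ 4)]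
  have hr : (⌈u ^ 2⌉₊ : ℝ) ≤ u ^ 2 + 1 := (Nat.ceil_lt_add_one (by positivity)).le
  have hr1 : (⌈u ^ 2⌉₊ : ℝ) + 1 ≤ Real.exp (u ^ 2 + 1) :=
    (Real.add_one_le_exp _).trans (Real.exp_le_exp.2 hr)
  have hpow : Real.exp u ^ (2 * ⌈u ^ 2⌉₊) ≤ Real.exp (2 * (u ^ 2 + 1) * u) := by
    rw [← Real.exp_nat_mul]
    push_cast
    gcongr
  have hdeg : 2 * s * (1 + u) + (u ^ 2 + 1) + 2 * (u ^ 2 + 1) * u ≤ -u + u ^ 4 := by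
    have hs : 2 * s * (1 + u) ≤ u * (1 + u) := by gcongr
    have h2 : 10 * u ≤ u ^ 2 := by nlinarith
    have h3 : 10 * u ^ 2 ≤ u ^ 3 := by nlinarith
    have h4 : 10 * u ^ 3 ≤ u ^ 4 := by nlinarith [pow_pos (show 0 < u by linarith) 3]
    nlinarith
  calc Real.exp (2 * s * (1 + u)) * ((⌈u ^ 2⌉₊ + 1) * Real.exp u ^ (2 * ⌈u ^ 2⌉₊) * κ / m)
      ≤ Real.exp (2 * s * (1 + u))
          * (Real.exp (u ^ 2 + 1) * Real.exp (2 * (u ^ 2 + 1) * u) * κ / m) := by gcongr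
    _ = κ / m * Real.exp (2 * s * (1 + u) + (u ^ 2 + 1) + 2 * (u ^ 2 + 1) * u) := by
        simp only [Real.exp_add]
        ring
    _ ≤ κ / m * (Real.exp (-u) * (2 * m)) := by
        refine mul_le_mul_of_nonneg_left ((Real.exp_le_exp.2 hdeg).trans ?_) (by positivity)
        rw [Real.exp_add]
        gcongr
    _ = 2 * κ * Real.exp (-u) := by field_simp

lemma eventually_exp_mul_truncation_error_le (s : ℝ) :
    ∀ᶠ u : ℝ in atTop, Real.exp (2 * s * (1 + u))
        * (2 * ((1 / 2) ^ ⌈u ^ 2⌉₊ * Real.exp (2 * s * (1 + u)))) ≤ 2 * Real.exp (-u) := by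
  filter_upwards [eventually_ge_atTop 10, eventually_ge_atTop (16 * s)] with u hu hus
  have hpow : (1 / 2 : ℝ) ^ ⌈u ^ 2⌉₊ ≤ Real.exp (-(u ^ 2 / 2)) := by
    calc (1 / 2 : ℝ) ^ ⌈u ^ 2⌉₊ ≤ Real.exp (-(1 / 2)) ^ ⌈u ^ 2⌉₊ := by
          gcongr
          linarith [Real.one_sub_le_exp_neg (1 / 2)]
      _ = Real.exp (-(⌈u ^ 2⌉₊ / 2)) := by rw [← Real.exp_nat_mul]; ring_nf
      _ ≤ Real.exp (-(u ^ 2 / 2)) := by gcongr; exact Nat.le_ceil _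
  have hdeg : 2 * s * (1 + u) + (-(u ^ 2 / 2) + 2 * s * (1 + u)) ≤ -u := by
    have hs : 16 * s * (1 + u) ≤ u * (1 + u) := by gcongr
    nlinarith
  calc Real.exp (2 * s * (1 + u)) * (2 * ((1 / 2) ^ ⌈u ^ 2⌉₊ * Real.exp (2 * s * (1 + u))))
      ≤ Real.exp (2 * s * (1 + u))
          * (2 * (Real.exp (-(u ^ 2 / 2)) * Real.exp (2 * s * (1 + u)))) := by gcongr
    _ = 2 * Real.exp (2 * s * (1 + u) + (-(u ^ 2 / 2) + 2 * s * (1 + u))) := by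
        simp only [Real.exp_add]
        ring
    _ ≤ 2 * Real.exp (-u) := by gcongr

/-- The truncation degree `u²` makes the truncation error small while keeping the moduli below
`exp (2 u³ + O(u))`, hence much smaller than `m`. -/
lemma exists_eventually_sieveError_le_div (k : ℕ) (s : ℝ) :
    ∃ C > 0, ∀ᶠ u : ℝ in atTop, ∀ m : ℕ, Real.exp (u ^ 4) ≤ 2 * m →
      ∀ w : ℝ, 1 ≤ w → w ≤ Real.exp u →
        sieveError k m ⌈u ^ 2⌉₊ s (Real.exp u) (1 + u) (2 / w) ≤ C / w := by
  have hκ : 0 ≤ cubeConst k := by unfold cubeConst; positivity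
  set A : ℝ := 2 ^ s * s ^ 2 * 2
  have hA0 : 0 ≤ A := by positivity
  refine ⟨2 * cubeConst k + 2 + A * Real.exp A, by positivity, ?_⟩
  filter_upwards [eventually_exp_mul_equidistribution_error_le s hκ,
    eventually_exp_mul_truncation_error_le s] with u hequi htrunc m hm w hw hwu
  have hexp : Real.exp (-u) ≤ 1 / w := by
    rw [Real.exp_neg, ← one_div]
    exact one_div_le_one_div_of_le (by linarith) hwu
  have hlocal := exp_div_sub_one_le hA0 hw
  calc sieveError k m ⌈u ^ 2⌉₊ s (Real.exp u) (1 + u) (2 / w)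
      ≤ (2 * cubeConst k * Real.exp (-u) + 2 * Real.exp (-u)) + A * Real.exp A / w := by
        rw [sieveError, mul_add, ← mul_div_assoc _ 2 w]
        exact add_le_add (add_le_add (hequi m hm) htrunc) hlocal
    _ ≤ (2 * cubeConst k * (1 / w) + 2 * (1 / w)) + A * Real.exp A / w := by gcongr
    _ = (2 * cubeConst k + 2 + A * Real.exp A) / w := by ring

end Asymptotics

section Primes

variable {w z : ℝ}

/-- The primes `p` with `w ≤ p < z`. -/
noncomputable def primesIco (w z : ℝ) : Finset ℕ := Nat.primesBelow ⌈z⌉₊ \ Nat.primesBelow ⌈w⌉₊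

lemma mem_primesIco {p : ℕ} : p ∈ primesIco w z ↔ p.Prime ∧ w ≤ p ∧ (p : ℝ) < z := by
  rw [primesIco, Finset.mem_sdiff, Nat.mem_primesBelow, Nat.mem_primesBelow, Nat.lt_ceil,
    Nat.lt_ceil, ← not_lt (b := w)]
  tauto

lemma primesIco_subset_Icc : primesIco w z ⊆ Finset.Icc 1 ⌊z⌋₊ := by
  intro p hp
  obtain ⟨hprime, -, hpz⟩ := mem_primesIco.1 hp
  exact Finset.mem_Icc.2 ⟨hprime.pos, Nat.le_floor hpz.le⟩

lemma card_primesIco_le (hz : 0 ≤ z) : ((primesIco w z).card : ℝ) ≤ z := by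
  have hcard := Finset.card_le_card (primesIco_subset_Icc (w := w) (z := z))
  rw [Nat.card_Icc, add_tsub_cancel_right] at hcard
  exact (Nat.cast_le.2 hcard).trans (Nat.floor_le hz)

lemma sum_primesIco_one_div_le (hz : 1 ≤ z) :
    ∑ p ∈ primesIco w z, 1 / (p : ℝ) ≤ 1 + Real.log z := by
  calc ∑ p ∈ primesIco w z, 1 / (p : ℝ) ≤ ∑ n ∈ Finset.Icc 1 ⌊z⌋₊, 1 / (n : ℝ) :=
        Finset.sum_le_sum_of_subset_of_nonneg primesIco_subset_Icc fun _ _ _ => by positivity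
    _ = harmonic ⌊z⌋₊ := by simp [harmonic_eq_sum_Icc]
    _ ≤ 1 + Real.log z := harmonic_floor_le_one_add_log z hz

lemma sum_primesIco_inv_sq_le (hw : 0 < w) : ∑ p ∈ primesIco w z, ((p : ℝ) ^ 2)⁻¹ ≤ 2 / w := by
  have hceil : 0 < ⌈w⌉₊ := Nat.ceil_pos.2 hw
  have hsub : primesIco w z ⊆ Finset.Ioo (⌈w⌉₊ - 1) ⌈z⌉₊ := by
    intro p hp
    obtain ⟨-, hwp, hpz⟩ := mem_primesIco.1 hp
    have := Nat.ceil_le.2 hwp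
    exact Finset.mem_Ioo.2 ⟨by omega, Nat.lt_ceil.2 hpz⟩
  calc ∑ p ∈ primesIco w z, ((p : ℝ) ^ 2)⁻¹
      ≤ ∑ n ∈ Finset.Ioo (⌈w⌉₊ - 1) ⌈z⌉₊, ((n : ℝ) ^ 2)⁻¹ :=
        Finset.sum_le_sum_of_subset_of_nonneg hsub fun _ _ _ => by positivity
    _ ≤ 2 / ((⌈w⌉₊ - 1 : ℕ) + 1) := sum_Ioo_inv_sq_le _ _
    _ ≤ 2 / w := by
        rw [← Nat.cast_add_one, Nat.sub_add_cancel hceil]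
        exact div_le_div_of_nonneg_left two_pos.le hw (Nat.le_ceil w)

lemma filter_prime_lt_eq_primesBelow (w : ℝ) :
    ((Finset.range (⌈w⌉₊ + 1)).filter fun p => Nat.Prime p ∧ (p : ℝ) < w)
      = Nat.primesBelow ⌈w⌉₊ := by
  ext p
  rw [Finset.mem_filter, Finset.mem_range, Nat.mem_primesBelow, ← Nat.lt_ceil]
  constructor
  · exact fun h => ⟨h.2.2, h.2.1⟩
  · exact fun h => ⟨by omega, h.2, h.1⟩

lemma primorialLT_eq_prod (w : ℝ) : primorialLT w = ∏ p ∈ Nat.primesBelow ⌈w⌉₊, p := by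
  rw [primorialLT, filter_prime_lt_eq_primesBelow]

lemma primorialLT_eq_primorial (w : ℝ) : primorialLT w = primorial (⌈w⌉₊ - 1) := by
  rw [primorialLT_eq_prod, primorial_eq_prod_primesLE]
  cases ⌈w⌉₊ <;> rfl

lemma primorialLT_pos (w : ℝ) : 0 < primorialLT w :=
  primorialLT_eq_primorial w ▸ primorial_pos _

lemma primorialLT_le_exp (hw : 0 ≤ w) : (primorialLT w : ℝ) ≤ Real.exp (2 * w) := by
  have hfour : (4 : ℝ) ≤ Real.exp 2 := by
    have := Real.quadratic_le_exp_of_nonneg (x := 2) two_pos.le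
    linarith
  have hceil : ((⌈w⌉₊ - 1 : ℕ) : ℝ) ≤ w := by
    have := Nat.ceil_lt_add_one hw
    rcases Nat.eq_zero_or_pos ⌈w⌉₊ with hzero | hpos
    · simpa [hzero] using hw
    · rw [Nat.cast_pred hpos]
      linarith
  calc (primorialLT w : ℝ) ≤ 4 ^ (⌈w⌉₊ - 1) := by
        rw [primorialLT_eq_primorial]
        exact_mod_cast primorial_le_four_pow _
    _ ≤ Real.exp 2 ^ (⌈w⌉₊ - 1) := by gcongr
    _ = Real.exp (2 * (⌈w⌉₊ - 1 : ℕ)) := by rw [← Real.exp_nat_mul, mul_comm]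
    _ ≤ Real.exp (2 * w) := by gcongr

lemma primorialLT_coprime {p : ℕ} (hp : p ∈ primesIco w z) : (primorialLT w).Coprime p := by
  obtain ⟨hprime, hwp, -⟩ := mem_primesIco.1 hp
  rw [primorialLT_eq_prod]
  refine Nat.Coprime.prod_left fun q hq => ?_
  have hqp := (Nat.lt_of_mem_primesBelow hq).trans_le (Nat.ceil_le.2 hwp)
  exact (Nat.coprime_primes (Nat.prime_of_mem_primesBelow hq) hprime).2 hqp.ne

lemma totient_div_mul_sieveWeight_prod_primes_eq_one {P : Finset ℕ} (hP : ∀ p ∈ P, p.Prime) {b : ℤ}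
    (hb : ∀ p ∈ P, ¬ (p : ℤ) ∣ b) (n : ℤ) :
    (Nat.totient (∏ p ∈ P, p) : ℝ) / (∏ p ∈ P, p : ℕ) * sieveWeight P (∏ p ∈ P, p) b n = 1 := by
  set W := ∏ p ∈ P, p
  have hW0 : (W : ℝ) ≠ 0 :=
    Nat.cast_ne_zero.2 (Finset.prod_ne_zero_iff.2 fun p hp => (hP p hp).ne_zero)
  have htotient : (Nat.totient W : ℝ) = W * ∏ p ∈ P, (1 - (p : ℝ)⁻¹) := by
    have := congrArg (Rat.cast : ℚ → ℝ) (Nat.totient_eq_mul_prod_factors W)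
    rw [Nat.primeFactors_prod hP] at this
    push_cast at this
    exact this
  have hndvd : ∀ p ∈ P, ¬ (p : ℤ) ∣ W * n + b := fun p hp hdvd =>
    hb p hp ((Int.dvd_add_right (Dvd.dvd.mul_right
      (Int.natCast_dvd_natCast.2 (Finset.dvd_prod_of_mem _ hp)) n)).1 hdvd)
  rw [htotient, mul_div_cancel_left₀ _ hW0, sieveWeight, ← Finset.prod_mul_distrib]
  refine Finset.prod_eq_one fun p hp => ?_
  have : (1 : ℝ) < p := by exact_mod_cast (hP p hp).one_lt
  rw [if_neg (hndvd p hp)]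
  field_simp
  exact div_self (by linarith)

lemma totient_div_mul_cramer_eq_sieveWeight (hwz : w ≤ z) {b : ℤ}
    (hb : IsCoprime b (primorialLT w)) (n : ℤ) :
    (Nat.totient (primorialLT w) : ℝ) / primorialLT w * cramer z (primorialLT w * n + b)
      = sieveWeight (primesIco w z) (primorialLT w) b n := by
  have hprime : ∀ p ∈ Nat.primesBelow ⌈w⌉₊, p.Prime := fun _ => Nat.prime_of_mem_primesBelow
  have hndvd : ∀ p ∈ Nat.primesBelow ⌈w⌉₊, ¬ (p : ℤ) ∣ b := by
    intro p hp hdvd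
    have hpW : (p : ℤ) ∣ primorialLT w := by
      rw [primorialLT_eq_prod]
      exact Int.natCast_dvd_natCast.2 (Finset.dvd_prod_of_mem _ hp)
    exact (Nat.prime_iff_prime_int.1 (hprime p hp)).not_isUnit (hb.isUnit_of_dvd' hdvd hpW)
  have hsub : Nat.primesBelow ⌈w⌉₊ ⊆ Nat.primesBelow ⌈z⌉₊ := fun p hp =>
    Nat.mem_primesBelow.2 ⟨(Nat.lt_of_mem_primesBelow hp).trans_le (Nat.ceil_mono hwz), hprime p hp⟩
  have hsmall := totient_div_mul_sieveWeight_prod_primes_eq_one hprime hndvd n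
  rw [← primorialLT_eq_prod] at hsmall
  rw [cramer, filter_prime_lt_eq_primesBelow, ← Finset.prod_sdiff hsub, mul_left_comm]
  exact (congrArg _ hsmall).trans (mul_one _)

end Primes

section CramerModel

open Filter

lemma abs_sum_prod_sieveWeight_primesIco_sub_card_le {k m : ℕ} {u w z : ℝ} (hw : 1 ≤ w)
    (hwz : w ≤ z) (hzu : z ≤ Real.exp u) (hm : k + 1 ≤ m) {W : ℕ}
    (hW : ∀ p ∈ primesIco w z, W.Coprime p) (b : ℤ) (S : Finset (Fin k → Bool)) (r : ℕ) :
    |∑ x ∈ cubeSet k m, ∏ ω ∈ S, sieveWeight (primesIco w z) W b (cubeForm ω x)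
        - (cubeSet k m).card|
      ≤ (cubeSet k m).card * sieveError k m r (2 ^ k) (Real.exp u) (1 + u) (2 / w) := by
  have hz : 1 ≤ z := hw.trans hwz
  have hcop : (primesIco w z : Set ℕ).Pairwise Nat.Coprime := fun p hp q hq hne =>
    (Nat.coprime_primes (mem_primesIco.1 hp).1 (mem_primesIco.1 hq).1).2 hne
  have hcard : (S.card : ℝ) ≤ 2 ^ k := by
    have := S.card_le_univ
    rw [Fintype.card_fun, Fintype.card_bool, Fintype.card_fin] at this
    exact_mod_cast this
  have hharmonic : ∑ p ∈ primesIco w z, 1 / (p : ℝ) ≤ 1 + u :=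
    (sum_primesIco_one_div_le hz).trans
      (add_le_add_right ((Real.log_le_iff_le_exp (by linarith)).2 hzu) 1)
  refine (abs_sum_prod_sieveWeight_sub_card_le b S hcop
    (fun p hp => (mem_primesIco.1 hp).1.two_le) hW
    (fun p hp => (mem_primesIco.1 hp).2.2.le.trans hzu)
    ((card_primesIco_le (by linarith)).trans hzu) (hz.trans hzu) hm r).trans ?_
  gcongr
  exact sieveError_mono (Nat.cast_nonneg _) hcard (Real.exp_nonneg u)
    (Finset.sum_nonneg fun p _ => by positivity) hharmonic
    (Finset.sum_nonneg fun p _ => by positivity) (sum_primesIco_inv_sq_le (by linarith))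

lemma exists_eventually_gowersUN_sieveWeight_sub_one_le (k : ℕ) :
    ∃ C > 0, ∀ᶠ u : ℝ in atTop, ∀ w z M : ℝ, 1 ≤ w → w ≤ z → z ≤ Real.exp u →
      Real.exp (u ^ 4) ≤ M → ∀ (W : ℕ) (b : ℤ), (∀ p ∈ primesIco w z, W.Coprime p) →
        gowersUN k M (fun n => (sieveWeight (primesIco w z) W b n : ℂ) - 1)
          ≤ C * w ^ (-((1 : ℝ) / 2 ^ k)) := by
  obtain ⟨C, hC, herror⟩ := exists_eventually_sieveError_le_div k (2 ^ k)
  refine ⟨(2 ^ 2 ^ k * C) ^ ((1 : ℝ) / 2 ^ k), by positivity, ?_⟩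
  filter_upwards [herror, eventually_ge_atTop 1, eventually_ge_atTop (2 * (k + 1) : ℝ)]
    with u herror hu huk w z M hw hwz hzu hM W b hW
  have hexp : u ≤ Real.exp (u ^ 4) := by
    linarith [Real.add_one_le_exp (u ^ 4), le_self_pow₀ hu four_ne_zero]
  have hfloor : Real.exp (u ^ 4) ≤ 2 * ⌊M⌋₊ := by
    have hone : (1 : ℝ) ≤ ⌊M⌋₊ := by
      exact_mod_cast Nat.le_floor (by simpa using hu.trans (hexp.trans hM))
    linarith [Nat.lt_floor_add_one M]
  have hm : k + 1 ≤ ⌊M⌋₊ := by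
    have : ((k + 1 : ℕ) : ℝ) ≤ ⌊M⌋₊ := by push_cast; linarith
    exact_mod_cast this
  have hw0 : 0 ≤ w := by linarith
  calc gowersUN k M (fun n => (sieveWeight (primesIco w z) W b n : ℂ) - 1)
      ≤ (2 ^ 2 ^ k * (C / w)) ^ ((1 : ℝ) / 2 ^ k) := by
        refine gowersUN_sub_one_le (by positivity) fun S => ?_
        refine (abs_sum_prod_sieveWeight_primesIco_sub_card_le hw hwz hzu hm hW b S
          ⌈u ^ 2⌉₊).trans ?_
        gcongr
        exact herror _ hfloor w hw (hwz.trans hzu)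
    _ = (2 ^ 2 ^ k * C) ^ ((1 : ℝ) / 2 ^ k) * w ^ (-((1 : ℝ) / 2 ^ k)) := by
        rw [← mul_div_assoc, Real.div_rpow (by positivity) hw0, Real.rpow_neg hw0, div_eq_mul_inv]

lemma eventually_exp_pow_four_le_sub_div_primorialLT :
    ∀ᶠ u : ℝ in atTop, ∀ w : ℝ, 0 ≤ w → w ≤ u ^ 5 / 4 → ∀ b : ℤ, b ≤ primorialLT w →
      Real.exp (u ^ 4) ≤ (Real.exp (u ^ 5) - b) / primorialLT w := by
  filter_upwards [eventually_ge_atTop 4] with u hu w hw hwu b hb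
  have hpos : (0 : ℝ) < primorialLT w := Nat.cast_pos.2 (primorialLT_pos w)
  have hb : (b : ℝ) ≤ primorialLT w := by exact_mod_cast hb
  have htwo : Real.exp (u ^ 4) + 1 ≤ Real.exp (u ^ 5 / 2) := by
    have hdeg : 1 + u ^ 4 ≤ u ^ 5 / 2 := by
      have : 1 ≤ u ^ 4 := one_le_pow₀ (by linarith)
      rw [pow_succ u 4]
      nlinarith
    calc Real.exp (u ^ 4) + 1 ≤ 2 * Real.exp (u ^ 4) := by
          linarith [Real.one_le_exp (x := u ^ 4) (by positivity)]
      _ ≤ Real.exp 1 * Real.exp (u ^ 4) := by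
          gcongr
          linarith [Real.add_one_le_exp 1]
      _ ≤ Real.exp (u ^ 5 / 2) := by rw [← Real.exp_add]; gcongr
  rw [le_div_iff₀ hpos, le_sub_iff_add_le]
  calc Real.exp (u ^ 4) * primorialLT w + b ≤ Real.exp (u ^ 4) * primorialLT w + primorialLT w := by
        gcongr
    _ = (Real.exp (u ^ 4) + 1) * primorialLT w := by ring
    _ ≤ Real.exp (u ^ 5 / 2) * Real.exp (2 * w) := by
        gcongr
        exact primorialLT_le_exp hw
    _ ≤ Real.exp (u ^ 5) := by
        rw [← Real.exp_add]
        gcongr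
        linarith

lemma eventually_Qparam_le_and_rpow_log_le :
    ∀ᶠ N : ℝ in atTop, Qparam N ≤ Real.exp (Real.log N ^ ((1 : ℝ) / 5)) ∧
      Real.log N ^ ((1 : ℝ) / 100) ≤ Real.log N / 4 := by
  filter_upwards [Real.tendsto_log_atTop.eventually_ge_atTop 16] with N hN
  have hone : 1 ≤ Real.log N := by linarith
  refine ⟨Real.exp_le_exp.2 (Real.rpow_le_rpow_of_exponent_le hone (by norm_num)), ?_⟩
  calc Real.log N ^ ((1 : ℝ) / 100) ≤ Real.log N ^ ((1 : ℝ) / 2) :=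
        Real.rpow_le_rpow_of_exponent_le hone (by norm_num)
    _ = √(Real.log N) := (Real.sqrt_eq_rpow _).symm
    _ ≤ Real.log N / 4 := by
        rw [Real.sqrt_le_left (by linarith)]
        nlinarith

theorem cramer_model_gowers_uniformity_on_progressions_general (k : ℕ) :
    ∃ C > 0, ∀ᶠ N : ℝ in atTop, ∀ w z : ℝ, 1 ≤ w → w ≤ z →
      z ≤ Real.exp (Real.log N ^ ((1 : ℝ) / 5)) → w ≤ Real.log N / 4 →
      ∀ b : ℤ, b ≤ primorialLT w → IsCoprime b (primorialLT w) →
        gowersUN k ((N - b) / primorialLT w)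
            (fun n => ((Nat.totient (primorialLT w) : ℝ) / primorialLT w
              * cramer z (primorialLT w * n + b) : ℝ) - 1)
          ≤ C * w ^ (-((1 : ℝ) / 2 ^ k)) := by
  obtain ⟨C, hC, hsieve⟩ := exists_eventually_gowersUN_sieveWeight_sub_one_le k
  refine ⟨C, hC, ?_⟩
  have hu : Tendsto (fun N => Real.log N ^ ((1 : ℝ) / 5)) atTop atTop :=
    (tendsto_rpow_atTop (by norm_num)).comp Real.tendsto_log_atTop
  filter_upwards [hu.eventually hsieve,
    hu.eventually eventually_exp_pow_four_le_sub_div_primorialLT, eventually_ge_atTop 1]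
    with N hsieve hlength hN w z hw hwz hz hwN b hb hcop
  have hfive : (Real.log N ^ ((1 : ℝ) / 5)) ^ 5 = Real.log N := by
    rw [one_div]
    exact_mod_cast Real.rpow_inv_natCast_pow (Real.log_nonneg hN) (by norm_num : 5 ≠ 0)
  simp only [hfive, Real.exp_log (one_pos.trans_le hN)] at hlength
  simp only [totient_div_mul_cramer_eq_sieveWeight hwz hcop]
  exact hsieve w z _ hw hwz hz (hlength w (by linarith) hwN b hb) _ b fun p => primorialLT_coprime

end CramerModel

theorem cramer_model_gowers_uniformity_on_progressions (k : ℕ) (hk : 1 ≤ k) :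
    ∃ c C : ℝ, 0 < c ∧ 0 < C ∧ ∃ N₀ : ℝ, ∀ N : ℝ, N₀ ≤ N →
      ∀ w z : ℝ, 2 ≤ w → w ≤ z → z ≤ Qparam N → w ≤ Real.log N ^ ((1 : ℝ) / 100) →
      ∀ W : ℕ, W = primorialLT w →
      ∀ b : ℕ, 1 ≤ b → b ≤ W → Nat.gcd b W = 1 →
        gowersUN k ((N - b) / W)
            (fun n => ((((Nat.totient W : ℝ) / (W : ℝ)) *
                cramer z ((W : ℤ) * n + (b : ℤ)) : ℝ) : ℂ) - 1)
          ≤ C * w ^ (-c) := by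
  obtain ⟨C, hC, hgeneral⟩ := cramer_model_gowers_uniformity_on_progressions_general k
  obtain ⟨N₀, hN₀⟩ :=
    Filter.eventually_atTop.1 (hgeneral.and eventually_Qparam_le_and_rpow_log_le)
  refine ⟨1 / 2 ^ k, C, by positivity, hC, N₀, ?_⟩
  rintro N hN w z hw hwz hz hwN W rfl b - hbW hgcd
  obtain ⟨hbound, hQ, hlog⟩ := hN₀ N hN
  exact_mod_cast hbound w z (by linarith) hwz (hz.trans hQ) (hwN.trans hlog) b
    (by exact_mod_cast hbW) (Nat.isCoprime_iff_coprime.2 hgcd)
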